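/- Let C ⊆ F_2^q be a linear code in which every codeword has Hamming weight congruent to 0 or 3 modulo 4. Then for any two codewords c, c', c·c' = 0 if and only if c or c' has even weight. -/

import Mathlib

open Matrix

/-!
Over `𝔽₂` the coordinatewise product `x * y` marks the overlap of the supports, so
`wt (x + y) = wt x + wt y - 2 wt (x * y)` and `x ⬝ᵥ y` is the parity of `wt (x * y)`.
When the weights of `x`, `y` and `x + y` are `0` or `3` modulo `4`, each weight is determined
modulo `4` by its parity, and the parity of `wt (x + y)` by those of `wt x` and `wt y`. Hence
`2 wt (x * y)` is known modulo `4`: it is `3 + 3 - 0 = 2` if both weights are odd, and `0`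
otherwise.
-/

section BinaryWords

variable {ι : Type*} [Fintype ι]

theorem hammingNorm_eq_card_filter_eq_one (x : ι → ZMod 2) :
    hammingNorm x = (Finset.univ.filter (fun i => x i = 1)).card := by
  have ne_zero_iff : ∀ a : ZMod 2, a ≠ 0 ↔ a = 1 := by decide
  simp only [hammingNorm, ne_zero_iff]

theorem hammingNorm_add_add_two_mul_hammingNorm_mul (x y : ι → ZMod 2) :
    hammingNorm (x + y) + 2 * hammingNorm (x * y) = hammingNorm x + hammingNorm y := by
  have coordinatewise : ∀ a b : ZMod 2,
      (if a + b ≠ 0 then 1 else 0) + 2 * (if a * b ≠ 0 then 1 else 0) =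
        (if a ≠ 0 then 1 else 0) + (if b ≠ 0 then 1 else 0 : ℕ) := by
    decide
  simp only [hammingNorm, Finset.card_filter, Finset.mul_sum, ← Finset.sum_add_distrib]
  exact Finset.sum_congr rfl fun i _ => coordinatewise (x i) (y i)

theorem sum_eq_natCast_hammingNorm (x : ι → ZMod 2) : ∑ i, x i = (hammingNorm x : ZMod 2) := by
  have eq_indicator : ∀ a : ZMod 2, a = if a ≠ 0 then 1 else 0 := by decide
  rw [hammingNorm, Finset.natCast_card_filter]
  exact Finset.sum_congr rfl fun i _ => eq_indicator (x i)

theorem dotProduct_eq_zero_iff_even_hammingNorm_mul (x y : ι → ZMod 2) :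
    x ⬝ᵥ y = 0 ↔ Even (hammingNorm (x * y)) := by
  rw [← ZMod.natCast_eq_zero_iff_even, ← sum_eq_natCast_hammingNorm]
  rfl

theorem stmt_10_general (x y : ι → ZMod 2)
    (hx : hammingNorm x % 4 = 0 ∨ hammingNorm x % 4 = 3)
    (hy : hammingNorm y % 4 = 0 ∨ hammingNorm y % 4 = 3)
    (hxy : hammingNorm (x + y) % 4 = 0 ∨ hammingNorm (x + y) % 4 = 3) :
    x ⬝ᵥ y = 0 ↔ Even (hammingNorm x) ∨ Even (hammingNorm y) := by
  have weight_add := hammingNorm_add_add_two_mul_hammingNorm_mul x y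
  rw [dotProduct_eq_zero_iff_even_hammingNorm_mul, Nat.even_iff, Nat.even_iff, Nat.even_iff]
  rcases hx with hx | hx <;> rcases hy with hy | hy
  · have weight_mod_four : hammingNorm (x + y) % 4 = 0 := by omega
    omega
  · have weight_mod_four : hammingNorm (x + y) % 4 = 3 := by omega
    omega
  · have weight_mod_four : hammingNorm (x + y) % 4 = 3 := by omega
    omega
  · have weight_mod_four : hammingNorm (x + y) % 4 = 0 := by omega
    omega

end BinaryWords

/-- In a binary linear code where every codeword has weight ≡ 0 or 3
(mod 4), two codewords satisfy `c·c' = 0` iff `c` or `c'` has even weight. -/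
theorem stmt_10 (q : ℕ) (C : Submodule (ZMod 2) (Fin q → ZMod 2))
    (hwt : ∀ c ∈ C, (Finset.univ.filter (fun i => c i = 1)).card % 4 = 0
                  ∨ (Finset.univ.filter (fun i => c i = 1)).card % 4 = 3) :
    ∀ c ∈ C, ∀ c' ∈ C,
      (c ⬝ᵥ c' = 0 ↔ Even (Finset.univ.filter (fun i => c i = 1)).card
                    ∨ Even (Finset.univ.filter (fun i => c' i = 1)).card) := by
  simp only [← hammingNorm_eq_card_filter_eq_one] at hwt ⊢
  exact fun c hc c' hc' =>
    stmt_10_general c c' (hwt c hc) (hwt c' hc') (hwt (c + c') (C.add_mem hc hc'))
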